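/- arXiv:2507.06225 — 4 statements merged into one kernel-verified Lean document; each statement's English description precedes it below -/
import Mathlib

section
/- Let M and N be matroids with collections S_M ⊆ 2^{E(M)} and S_N ⊆ 2^{E(N)} such that S_M covers M and S_N covers N. If the isomorphism algebra 𝔄•(M,N,S) is nonzero, then |E(M)| = |E(N)|. -/
open scoped BigOperators TensorProduct

namespace MatroidGame

/-- A "pre-matroid": a finite ground set together with a distinguished collection of
finsets (intended to be the bases). -/
structure PreMatroid (α : Type*) where
  E : Finset α
  bases : Finset (Finset α)

namespace PreMatroid

variable {α : Type*} [DecidableEq α]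

/-- The paper's definition of a matroid: a nonempty collection of `r`-element subsets of the
ground set satisfying the basis exchange axiom. -/
def IsMatroid (M : PreMatroid α) : Prop :=
  M.bases.Nonempty ∧
    (∀ B ∈ M.bases, B ⊆ M.E) ∧
    (∀ B₁ ∈ M.bases, ∀ B₂ ∈ M.bases, B₁.card = B₂.card) ∧
    (∀ B₁ ∈ M.bases, ∀ B₂ ∈ M.bases, ∀ a ∈ B₁ \ B₂,
      ∃ b ∈ B₂ \ B₁, insert b (B₁.erase a) ∈ M.bases)

/-- A set is independent if it is contained in a basis. -/
def Indep (M : PreMatroid α) (I : Finset α) : Prop :=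
  ∃ B ∈ M.bases, I ⊆ B

instance (M : PreMatroid α) : DecidablePred M.Indep := fun I =>
  inferInstanceAs (Decidable (∃ B ∈ M.bases, I ⊆ B))

/-- The rank of a subset: the maximal size of an independent subset of it. -/
def rkSet (M : PreMatroid α) (X : Finset α) : ℕ :=
  (X.powerset.filter fun I => M.Indep I).sup Finset.card

/-- The rank of the matroid. -/
def rk (M : PreMatroid α) : ℕ := M.rkSet M.E

/-- A circuit is a minimal dependent subset of the ground set. -/
def Circuit (M : PreMatroid α) (C : Finset α) : Prop :=
  C ⊆ M.E ∧ ¬M.Indep C ∧ ∀ D ⊂ C, M.Indep D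

/-- A matroid is paving if every circuit has size at least the rank. -/
def Paving (M : PreMatroid α) : Prop := ∀ C, M.Circuit C → M.rk ≤ C.card

/-- The dual matroid: bases are complements of bases. -/
def dual (M : PreMatroid α) : PreMatroid α := ⟨M.E, M.bases.image fun B => M.E \ B⟩

/-- A matroid is sparse paving if both it and its dual are paving. -/
def SparsePaving (M : PreMatroid α) : Prop := M.Paving ∧ M.dual.Paving

/-- The closure of a set. -/
def cl (M : PreMatroid α) (X : Finset α) : Finset α :=
  M.E.filter fun b => M.rkSet (insert b X) = M.rkSet X

/-- A flat is a closed subset. -/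
def IsFlat (M : PreMatroid α) (F : Finset α) : Prop := F ⊆ M.E ∧ M.cl F = F

/-- A hyperplane is a flat of rank `rk M - 1`. -/
def IsHyperplane (M : PreMatroid α) (H : Finset α) : Prop :=
  M.IsFlat H ∧ M.rkSet H = M.rk - 1

/-- A cyclic hyperplane is a hyperplane which is a union of circuits. -/
def IsCyclicHyperplane (M : PreMatroid α) (H : Finset α) : Prop :=
  M.IsHyperplane H ∧ ∀ x ∈ H, ∃ C, M.Circuit C ∧ C ⊆ H ∧ x ∈ C

/-- A loop is a ground set element contained in no basis. -/
def IsLoop (M : PreMatroid α) (a : α) : Prop := a ∈ M.E ∧ ∀ B ∈ M.bases, a ∉ B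

/-- A coloop is a ground set element contained in every basis. -/
def IsColoop (M : PreMatroid α) (a : α) : Prop := a ∈ M.E ∧ ∀ B ∈ M.bases, a ∈ B

def Loopless (M : PreMatroid α) : Prop := ∀ a, ¬M.IsLoop a

/-- A matroid is simple if it has no loops and every rank-1 subset is a singleton. -/
def Simple (M : PreMatroid α) : Prop :=
  M.Loopless ∧ ∀ X ⊆ M.E, M.rkSet X = 1 → X.card = 1

/-- The restriction `M | Y`: its independent sets are the independent sets of `M` contained
in `Y`, and its bases are the maximal such sets. -/
def restrict (M : PreMatroid α) (Y : Finset α) : PreMatroid α :=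
  ⟨Y, Y.powerset.filter fun B =>
      M.Indep B ∧ ∀ I ∈ Y.powerset, M.Indep I → B ⊆ I → I = B⟩

/-- `M` is the free extension of `N` by the new element `e`. -/
def IsFreeExtension (M N : PreMatroid α) (e : α) : Prop :=
  e ∉ N.E ∧ M.E = insert e N.E ∧
    ∀ B : Finset α, B ∈ M.bases ↔
      (B ∈ N.bases ∨ ∃ A : Finset α, N.Indep A ∧ A.card = N.rk - 1 ∧ B = insert e A)

/-- The uniform matroid of rank `k` on the ground set `E`. -/
def uniform {β : Type*} (E : Finset β) (k : ℕ) : PreMatroid β := ⟨E, E.powersetCard k⟩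

/-- The direct sum of two matroids. -/
def directSum {β γ : Type*} [DecidableEq β] [DecidableEq γ] (M : PreMatroid β)
    (N : PreMatroid γ) : PreMatroid (β ⊕ γ) :=
  ⟨M.E.map ⟨Sum.inl, Sum.inl_injective⟩ ∪ N.E.map ⟨Sum.inr, Sum.inr_injective⟩,
    (M.bases ×ˢ N.bases).image fun p =>
      p.1.map ⟨Sum.inl, Sum.inl_injective⟩ ∪ p.2.map ⟨Sum.inr, Sum.inr_injective⟩⟩

/-- `φ` realizes an isomorphism of matroids: it is a bijection of the ground sets such that a
subset of the ground set is a basis iff its image is a basis. -/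
def IsIsoMap {β γ : Type*} [DecidableEq γ] (M : PreMatroid β) (N : PreMatroid γ)
    (φ : β → γ) : Prop :=
  Set.BijOn φ ↑M.E ↑N.E ∧ ∀ B ⊆ M.E, (B ∈ M.bases ↔ B.image φ ∈ N.bases)

/-- Two matroids are isomorphic. -/
def Iso {β γ : Type*} [DecidableEq γ] (M : PreMatroid β) (N : PreMatroid γ) : Prop :=
  ∃ φ : β → γ, M.IsIsoMap N φ

end PreMatroid

/-- The pointed sets `S•`: pairs `(A, p)` with `A ∈ S` and `p ∈ A`. -/
abbrev PtSet {α : Type*} (S : Finset (Finset α)) : Type _ :=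
  {v : Finset α × α // v.1 ∈ S ∧ v.2 ∈ v.1}

/-- The relation `rel` on pointed sets, valued in `{0,1,2,3}`. -/
def relNum {α : Type*} [DecidableEq α] (a b : Finset α × α) : ℕ :=
  if a.1 = b.1 then (if a.2 = b.2 then 0 else 2) else (if a.2 = b.2 then 1 else 3)

/-- `S` covers the ground set `E` if every element of `E` lies in a member of `S`. -/
def Covers {α : Type*} (S : Finset (Finset α)) (E : Finset α) : Prop :=
  ∀ a ∈ E, ∃ A ∈ S, a ∈ A

noncomputable section

/-- The defining relations of the quantum isomorphism (magic unitary) algebra `𝔖(I,J)`. -/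
inductive MagicRel (I J : Type*) [Fintype I] [Fintype J] :
    FreeAlgebra ℂ (I × J) → FreeAlgebra ℂ (I × J) → Prop
  | idem (a : I) (x : J) :
      MagicRel I J (FreeAlgebra.ι ℂ (a, x) * FreeAlgebra.ι ℂ (a, x)) (FreeAlgebra.ι ℂ (a, x))
  | row (a : I) {x y : J} (h : x ≠ y) :
      MagicRel I J (FreeAlgebra.ι ℂ (a, x) * FreeAlgebra.ι ℂ (a, y)) 0
  | col {a b : I} (x : J) (h : a ≠ b) :
      MagicRel I J (FreeAlgebra.ι ℂ (a, x) * FreeAlgebra.ι ℂ (b, x)) 0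
  | rowSum (a : I) : MagicRel I J (∑ x : J, FreeAlgebra.ι ℂ (a, x)) 1
  | colSum (x : J) : MagicRel I J (∑ a : I, FreeAlgebra.ι ℂ (a, x)) 1

/-- The quantum isomorphism algebra `𝔖(I,J)`. -/
abbrev MagicAlgebra (I J : Type*) [Fintype I] [Fintype J] := RingQuot (MagicRel I J)

/-- The generator `u_{a x}` of `𝔖(I,J)`. -/
def magicGen (I J : Type*) [Fintype I] [Fintype J] (a : I) (x : J) : MagicAlgebra I J :=
  RingQuot.mkAlgHom ℂ (MagicRel I J) (FreeAlgebra.ι ℂ (a, x))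

/-- The defining relations of the isomorphism algebra: magic unitary relations together with
`u_{a x} u_{b y} = 0` whenever `rel(a,b) ≠ rel(x,y)`. -/
inductive IsoRel (I J : Type*) [Fintype I] [Fintype J] (rI : I → I → ℕ) (rJ : J → J → ℕ) :
    FreeAlgebra ℂ (I × J) → FreeAlgebra ℂ (I × J) → Prop
  | magic {u v : FreeAlgebra ℂ (I × J)} : MagicRel I J u v → IsoRel I J rI rJ u v
  | mismatch (a b : I) (x y : J) (h : rI a b ≠ rJ x y) :
      IsoRel I J rI rJ (FreeAlgebra.ι ℂ (a, x) * FreeAlgebra.ι ℂ (b, y)) 0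

/-- The generic isomorphism algebra for two relation-valued structures. -/
abbrev IsoAlgebra (I J : Type*) [Fintype I] [Fintype J] (rI : I → I → ℕ)
    (rJ : J → J → ℕ) :=
  RingQuot (IsoRel I J rI rJ)

/-- The generator `u_{a x}` of the isomorphism algebra. -/
def isoGen (I J : Type*) [Fintype I] [Fintype J] (rI : I → I → ℕ) (rJ : J → J → ℕ)
    (a : I) (x : J) : IsoAlgebra I J rI rJ :=
  RingQuot.mkAlgHom ℂ (IsoRel I J rI rJ) (FreeAlgebra.ι ℂ (a, x))

/-- `rel` as a function on pointed sets. -/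
abbrev ptRel {α : Type*} [DecidableEq α] (S : Finset (Finset α)) : PtSet S → PtSet S → ℕ :=
  fun a b => relNum a.val b.val

/-- The isomorphism `∗`-algebra `𝔄•(M,N,S)` associated to the matroid isomorphism game,
presented by magic unitary relations on pointed sets plus the `rel` mismatch relations. -/
abbrev MatIsoAlgebra {α β : Type*} [Fintype α] [Fintype β] [DecidableEq α] [DecidableEq β]
    (S_M : Finset (Finset α)) (S_N : Finset (Finset β)) :=
  IsoAlgebra (PtSet S_M) (PtSet S_N) (ptRel S_M) (ptRel S_N)

/-- The generator `u_{𝔞 𝔵}` of `𝔄•(M,N,S)`. -/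
def matGen {α β : Type*} [Fintype α] [Fintype β] [DecidableEq α] [DecidableEq β]
    (S_M : Finset (Finset α)) (S_N : Finset (Finset β)) (a : PtSet S_M) (x : PtSet S_N) :
    MatIsoAlgebra S_M S_N :=
  isoGen (PtSet S_M) (PtSet S_N) (ptRel S_M) (ptRel S_N) a x

end


open PreMatroid

/-!
The pointed sets are fibered over the ground sets, and the generators `u_{ax}` can be summed over
these fibers. When `a` has point `p` and `x` has point `q`, the row sum `∑_{y : p_y = q} u_{ay}`
and the column sum `∑_{b : p_b = p} u_{bx}` coincide: since `rel` records whether points agree,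
each of them equals the product of the two. Hence these elements depend only on `p` and `q` and
form an `E(M) × E(N)` matrix whose rows and columns sum to one. Adding up all its entries in both
orders gives `|E(M)| = |E(N)|` in the algebra, which has characteristic zero if it is nonzero.
-/

section FiberSums

variable {I J ι κ R : Type*}

theorem mul_sum_eq_self_of_sum_eq_one [NonAssocSemiring R] [Fintype I] {v : I → R} {r : R}
    {s : Finset I} (hv : ∑ i, v i = 1) (h : ∀ i ∉ s, r * v i = 0) : r * ∑ i ∈ s, v i = r := by
  rw [Finset.mul_sum, Finset.sum_subset s.subset_univ fun i _ => h i, ← Finset.mul_sum, hv, mul_one]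

theorem sum_mul_eq_self_of_sum_eq_one [NonAssocSemiring R] [Fintype I] {v : I → R} {r : R}
    {s : Finset I} (hv : ∑ i, v i = 1) (h : ∀ i ∉ s, v i * r = 0) : (∑ i ∈ s, v i) * r = r := by
  rw [Finset.sum_mul, Finset.sum_subset s.subset_univ fun i _ => h i, ← Finset.sum_mul, hv, one_mul]

/-- A rectangular matrix all of whose rows and columns sum to one: the linear part of the notion
of a magic unitary. -/
structure HasUnitSums [AddCommMonoidWithOne R] [Fintype I] [Fintype J] (u : I → J → R) : Prop where
  row (a : I) : ∑ x, u a x = 1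
  col (x : J) : ∑ a, u a x = 1

/-- The matrix `u` matches the partition of `I` into fibers of `f` with the partition of `J` into
fibers of `g`, in the sense of the orthogonality relations of an isomorphism game: `u_{ax} u_{by}`
vanishes if exactly one of the pairs `(a, b)` and `(x, y)` lies in a common fiber. -/
def RespectsFibers [Mul R] [Zero R] (f : I → ι) (g : J → κ) (u : I → J → R) : Prop :=
  ∀ ⦃a b x y⦄, ¬(f a = f b ↔ g x = g y) → u a x * u b y = 0

/-- The matrix induced by `u` on fibers: its `(p, q)` entry is the sum of row `s p` of `u` over the
fiber of `g` at `q`, where `s` chooses a representative row for each `p`. -/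
def fiberSum [AddCommMonoid R] [Fintype J] [DecidableEq κ] (s : ι → I) (g : J → κ)
    (u : I → J → R) (p : ι) (q : κ) : R :=
  ∑ y with g y = q, u (s p) y

namespace HasUnitSums

variable [Fintype I] [Fintype J] {u : I → J → R}

theorem natCast_card_eq [AddCommMonoidWithOne R] (hu : HasUnitSums u) :
    (Fintype.card I : R) = Fintype.card J :=
  calc
    (Fintype.card I : R) = ∑ a, ∑ x, u a x := by simp [hu.row]
    _ = ∑ x, ∑ a, u a x := Finset.sum_comm
    _ = Fintype.card J := by simp [hu.col]

variable [NonAssocSemiring R] {f : I → ι} {g : J → κ}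

theorem sum_row_fiber_eq_sum_col_fiber [DecidableEq ι] [DecidableEq κ] (hu : HasUnitSums u)
    (hfg : RespectsFibers f g u) (a : I) (x : J) :
    ∑ y with g y = g x, u a y = ∑ b with f b = f a, u b x := by
  have row_mul_entry : ∀ b ∉ ({b | f b = f a} : Finset I),
      (∑ y with g y = g x, u a y) * u b x = 0 := by
    intro b hb
    rw [Finset.sum_mul]
    refine Finset.sum_eq_zero fun y hy => hfg fun hiff => hb ?_
    simpa using (hiff.mpr (Finset.mem_filter.mp hy).2).symm
  have entry_mul_col : ∀ y ∉ ({y | g y = g x} : Finset J),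
      u a y * ∑ b with f b = f a, u b x = 0 := by
    intro y hy
    rw [Finset.mul_sum]
    refine Finset.sum_eq_zero fun b hb => hfg fun hiff => hy ?_
    simpa using hiff.mp (Finset.mem_filter.mp hb).2.symm
  exact (mul_sum_eq_self_of_sum_eq_one (hu.col x) row_mul_entry).symm.trans
    (sum_mul_eq_self_of_sum_eq_one (hu.row a) entry_mul_col)

protected theorem fiberSum [Fintype ι] [Fintype κ] [DecidableEq κ] (hu : HasUnitSums u)
    (hfg : RespectsFibers f g u) {s : ι → I} (hs : Function.RightInverse s f)
    (hg : Function.Surjective g) : HasUnitSums (MatroidGame.fiberSum s g u) where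
  row p := (Finset.sum_fiberwise _ g _).trans (hu.row (s p))
  col q := by
    classical
    obtain ⟨x, rfl⟩ := hg q
    have entry_eq (p : ι) : MatroidGame.fiberSum s g u p (g x) = ∑ b with f b = p, u b x := by
      simpa only [hs p, MatroidGame.fiberSum] using
        hu.sum_row_fiber_eq_sum_col_fiber hfg (s p) x
    simp only [entry_eq]
    exact (Finset.sum_fiberwise _ f _).trans (hu.col x)

theorem card_eq_of_respectsFibers [CharZero R] [Fintype ι] [Fintype κ] (hu : HasUnitSums u)
    (hfg : RespectsFibers f g u) (hf : Function.Surjective f) (hg : Function.Surjective g) :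
    Fintype.card ι = Fintype.card κ := by
  classical
  exact Nat.cast_injective (R := R)
    (hu.fiberSum hfg (Function.rightInverse_surjInv hf) hg).natCast_card_eq

end HasUnitSums

end FiberSums

section IsoAlgebra

variable {I J : Type*} [Fintype I] [Fintype J] {rI : I → I → ℕ} {rJ : J → J → ℕ}

theorem hasUnitSums_isoGen : HasUnitSums (isoGen I J rI rJ) where
  row a := by
    simpa only [map_sum, map_one, isoGen] using
      RingQuot.mkAlgHom_rel ℂ (IsoRel.magic (rI := rI) (rJ := rJ) (MagicRel.rowSum a))
  col x := by
    simpa only [map_sum, map_one, isoGen] using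
      RingQuot.mkAlgHom_rel ℂ (IsoRel.magic (rI := rI) (rJ := rJ) (MagicRel.colSum x))

theorem isoGen_mul_isoGen_of_ne {a b : I} {x y : J} (h : rI a b ≠ rJ x y) :
    isoGen I J rI rJ a x * isoGen I J rI rJ b y = 0 := by
  simpa only [map_mul, map_zero, isoGen] using RingQuot.mkAlgHom_rel ℂ (IsoRel.mismatch a b x y h)

end IsoAlgebra

section MatIsoAlgebra

variable {α β : Type*}

theorem snd_eq_iff_of_relNum_eq [DecidableEq α] [DecidableEq β] {a b : Finset α × α}
    {x y : Finset β × β} (h : relNum a b = relNum x y) : a.2 = b.2 ↔ x.2 = y.2 := by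
  unfold relNum at h
  split_ifs at h <;> simp_all

/-- The point of a pointed set, as an element of a ground set `E` containing all members of `S`. -/
def PtSet.point {S : Finset (Finset α)} {E : Finset α} (hS : ∀ A ∈ S, A ⊆ E) (a : PtSet S) : E :=
  ⟨a.1.2, hS a.1.1 a.2.1 a.2.2⟩

theorem Covers.point_surjective {S : Finset (Finset α)} {E : Finset α} (hcov : Covers S E)
    (hS : ∀ A ∈ S, A ⊆ E) : Function.Surjective (PtSet.point hS) := by
  rintro ⟨p, hp⟩
  obtain ⟨A, hA, hpA⟩ := hcov p hp
  exact ⟨⟨(A, p), hA, hpA⟩, rfl⟩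

variable [Fintype α] [Fintype β] [DecidableEq α] [DecidableEq β]
  {S_M : Finset (Finset α)} {S_N : Finset (Finset β)} {E : Finset α} {F : Finset β}

theorem respectsFibers_matGen (hSM : ∀ A ∈ S_M, A ⊆ E) (hSN : ∀ A ∈ S_N, A ⊆ F) :
    RespectsFibers (PtSet.point hSM) (PtSet.point hSN) (matGen S_M S_N) := by
  intro a b x y hpoint
  refine isoGen_mul_isoGen_of_ne fun hrel => hpoint ?_
  simpa only [PtSet.point, Subtype.mk.injEq] using snd_eq_iff_of_relNum_eq hrel

theorem stmt13_general (hSM : ∀ A ∈ S_M, A ⊆ E) (hSN : ∀ A ∈ S_N, A ⊆ F)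
    (hcovM : Covers S_M E) (hcovN : Covers S_N F) (hnz : Nontrivial (MatIsoAlgebra S_M S_N)) :
    E.card = F.card := by
  have : CharZero (MatIsoAlgebra S_M S_N) := algebraRat.charZero _
  have hgen : HasUnitSums (matGen S_M S_N) := hasUnitSums_isoGen
  simpa only [Fintype.card_coe] using
    hgen.card_eq_of_respectsFibers (respectsFibers_matGen hSM hSN)
      (hcovM.point_surjective hSM) (hcovN.point_surjective hSN)

end MatIsoAlgebra

theorem stmt13 {α β : Type*} [Fintype α] [Fintype β] [DecidableEq α] [DecidableEq β]
    (M : PreMatroid α) (N : PreMatroid β) (hM : M.IsMatroid) (hN : N.IsMatroid)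
    (S_M : Finset (Finset α)) (S_N : Finset (Finset β))
    (hSM : ∀ A ∈ S_M, A ⊆ M.E) (hSN : ∀ A ∈ S_N, A ⊆ N.E)
    (hcovM : Covers S_M M.E) (hcovN : Covers S_N N.E)
    (hnz : Nontrivial (MatIsoAlgebra S_M S_N)) :
    M.E.card = N.E.card := by
  exact stmt13_general hSM hSN hcovM hcovN hnz

end MatroidGame
end

section
/- Let L, M, N be matroids with collections S_L ⊆ 2^{E(L)}, S_M ⊆ 2^{E(M)}, S_N ⊆ 2^{E(N)}. Then the assignment u_{ax} ↦ Σ_{s ∈ S•(M)} u_{as} ⊗ u_{sx} (for a ∈ S•(L), x ∈ S•(N)) induces a well-defined unital ℂ-algebra homomorphism Δ : 𝔄•(L,N,S) → 𝔄•(L,M,S) ⊗ 𝔄•(M,N,S). -/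
open scoped BigOperators TensorProduct

namespace MatroidGame

open PreMatroid

/-!
A homomorphism from an isomorphism algebra to `A` is the same as a matrix over `A` satisfying the
defining relations. Those relations are preserved by the product `u * v` of matrices whose entries
commute with each other, and `Δ` is the homomorphism classified by the product of the two
generating matrices, placed in the commuting tensor factors. For the vanishing of mismatched
products, expand `(u * v) a x * (u * v) b y` as the sum of the terms
`(u a s * u b t) * (v s x * v t y)`: if `rI a b ≠ rK x y`, then `rJ s t` differs from one of these
two values, so one of the two factors is zero. Orthogonality of rows and columns is the case in
which all three relations are equality.
-/

section QuantumIso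

variable {I J K A B C : Type*} [Semiring A] [Semiring B]

/-- The matrix `u` respects the `C`-valued relations `rI` and `rJ` if products of entries at
mismatched index pairs vanish. For a permutation matrix, this says that the permutation carries
`rI` to `rJ`. -/
def RespectsRel (rI : I → I → C) (rJ : J → J → C) (u : Matrix I J A) : Prop :=
  ∀ ⦃a b x y⦄, rI a b ≠ rJ x y → u a x * u b y = 0

/-- A quantum isomorphism from `(I, rI)` to `(J, rJ)` with entries in `A`: a magic unitary that
respects the two relations, as parametrized by the algebra homomorphisms `IsoAlgebra I J rI rJ → A`.
Orthogonality within rows and columns is phrased as respecting the `Prop`-valued equality relations;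
idempotence of the entries is then `IsQuantumIso.isIdempotentElem`. -/
structure IsQuantumIso [Fintype I] [Fintype J] (rI : I → I → C) (rJ : J → J → C)
    (u : Matrix I J A) : Prop where
  sum_row : ∀ a, ∑ x, u a x = 1
  sum_col : ∀ x, ∑ a, u a x = 1
  respectsRel_eq : RespectsRel Eq Eq u
  respectsRel : RespectsRel rI rJ u

variable {rI : I → I → C} {rJ : J → J → C} {rK : K → K → C}

namespace RespectsRel

lemma map {F : Type*} [FunLike F A B] [RingHomClass F A B] {u : Matrix I J A}
    (hu : RespectsRel rI rJ u) (f : F) : RespectsRel rI rJ (u.map f) := fun a b x y h ↦ by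
  rw [Matrix.map_apply, Matrix.map_apply, ← map_mul, hu h, map_zero]

lemma mul [Fintype J] {u : Matrix I J A} {v : Matrix J K A} (hu : RespectsRel rI rJ u)
    (hv : RespectsRel rJ rK v) (huv : ∀ a s t x, Commute (u a s) (v t x)) :
    RespectsRel rI rK (u * v) := fun a b x y h ↦ by
  rw [Matrix.mul_apply, Matrix.mul_apply, Finset.sum_mul_sum]
  refine Finset.sum_eq_zero fun s _ ↦ Finset.sum_eq_zero fun t _ ↦ ?_
  rw [(huv b t s x).symm.mul_mul_mul_comm]
  by_cases hst : rI a b = rJ s t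
  · rw [hv (hst ▸ h), mul_zero]
  · rw [hu hst, zero_mul]

end RespectsRel

namespace IsQuantumIso

variable [Fintype I] [Fintype J] [Fintype K]

lemma isIdempotentElem {u : Matrix I J A} (hu : IsQuantumIso rI rJ u) (a : I) (x : J) :
    IsIdempotentElem (u a x) := by
  have row_orthogonal (y : J) (hy : y ≠ x) : u a x * u a y = 0 :=
    hu.respectsRel_eq (by simpa using hy.symm)
  calc u a x * u a x
      = ∑ y, u a x * u a y := (Fintype.sum_eq_single x row_orthogonal).symm
    _ = u a x := by rw [← Finset.mul_sum, hu.sum_row, mul_one]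

lemma map {F : Type*} [FunLike F A B] [RingHomClass F A B] {u : Matrix I J A}
    (hu : IsQuantumIso rI rJ u) (f : F) : IsQuantumIso rI rJ (u.map f) where
  sum_row a := by simp only [Matrix.map_apply, ← map_sum, hu.sum_row, map_one]
  sum_col x := by simp only [Matrix.map_apply, ← map_sum, hu.sum_col, map_one]
  respectsRel_eq := hu.respectsRel_eq.map f
  respectsRel := hu.respectsRel.map f

lemma mul {u : Matrix I J A} {v : Matrix J K A} (hu : IsQuantumIso rI rJ u)
    (hv : IsQuantumIso rJ rK v) (huv : ∀ a s t x, Commute (u a s) (v t x)) :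
    IsQuantumIso rI rK (u * v) where
  sum_row a := by
    simp only [Matrix.mul_apply]
    rw [Finset.sum_comm]
    simp only [← Finset.mul_sum, hv.sum_row, mul_one, hu.sum_row]
  sum_col x := by
    simp only [Matrix.mul_apply]
    rw [Finset.sum_comm]
    simp only [← Finset.sum_mul, hu.sum_col, one_mul, hv.sum_col]
  respectsRel_eq := hu.respectsRel_eq.mul hv.respectsRel_eq huv
  respectsRel := hu.respectsRel.mul hv.respectsRel huv

lemma tmul {R : Type*} [CommSemiring R] [Algebra R A] [Algebra R B] {u : Matrix I J A}
    {v : Matrix J K B} (hu : IsQuantumIso rI rJ u) (hv : IsQuantumIso rJ rK v) :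
    IsQuantumIso rI rK (Matrix.of fun a x ↦ ∑ s, u a s ⊗ₜ[R] v s x) := by
  let ι₁ : A →ₐ[R] A ⊗[R] B := Algebra.TensorProduct.includeLeft
  let ι₂ : B →ₐ[R] A ⊗[R] B := Algebra.TensorProduct.includeRight
  have mul_eq : u.map ι₁ * v.map ι₂ = Matrix.of fun a x ↦ ∑ s, u a s ⊗ₜ[R] v s x := by
    ext a x
    simp [ι₁, ι₂, Matrix.mul_apply]
  have ι_commute (p : A) (q : B) : Commute (ι₁ p) (ι₂ q) := by
    simp [ι₁, ι₂, Commute, SemiconjBy]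
  exact mul_eq ▸ (hu.map ι₁).mul (hv.map ι₂) fun _ _ _ _ ↦ ι_commute _ _

end IsQuantumIso

end QuantumIso

section IsoAlgebra

variable {I J K A : Type*} [Fintype I] [Fintype J] [Fintype K] [Semiring A] [Algebra ℂ A]
  {rI : I → I → ℕ} {rJ : J → J → ℕ}

variable (rI rJ) in
lemma isQuantumIso_isoGen : IsQuantumIso rI rJ (Matrix.of (isoGen I J rI rJ)) where
  sum_row a := by
    simpa only [Matrix.of_apply, isoGen, map_sum, map_one] using
      RingQuot.mkAlgHom_rel ℂ (IsoRel.magic (rI := rI) (rJ := rJ) (MagicRel.rowSum a))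
  sum_col x := by
    simpa only [Matrix.of_apply, isoGen, map_sum, map_one] using
      RingQuot.mkAlgHom_rel ℂ (IsoRel.magic (rI := rI) (rJ := rJ) (MagicRel.colSum x))
  respectsRel_eq a b x y h := by
    by_cases hab : a = b
    · subst hab
      have hxy : x ≠ y := by simpa using h
      simpa only [Matrix.of_apply, isoGen, map_mul, map_zero] using
        RingQuot.mkAlgHom_rel ℂ (IsoRel.magic (rI := rI) (rJ := rJ) (MagicRel.row a hxy))
    · obtain rfl : x = y := by simpa [hab] using h
      simpa only [Matrix.of_apply, isoGen, map_mul, map_zero] using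
        RingQuot.mkAlgHom_rel ℂ (IsoRel.magic (rI := rI) (rJ := rJ) (MagicRel.col x hab))
  respectsRel a b x y h := by
    simpa only [Matrix.of_apply, isoGen, map_mul, map_zero] using
      RingQuot.mkAlgHom_rel ℂ (IsoRel.mismatch a b x y h)

namespace IsQuantumIso

variable {u : Matrix I J A}

lemma lift_eq_of_isoRel (hu : IsQuantumIso rI rJ u) {p q : FreeAlgebra ℂ (I × J)}
    (h : IsoRel I J rI rJ p q) :
    FreeAlgebra.lift ℂ (fun i ↦ u i.1 i.2) p = FreeAlgebra.lift ℂ (fun i ↦ u i.1 i.2) q := by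
  cases h with
  | magic h =>
    cases h <;> simp only [map_mul, map_sum, map_zero, map_one, FreeAlgebra.lift_ι_apply]
    case idem a x => exact hu.isIdempotentElem a x
    case row a x y hxy => exact hu.respectsRel_eq (by simpa using hxy)
    case col a b x hab => exact hu.respectsRel_eq (by simpa using hab)
    case rowSum a => exact hu.sum_row a
    case colSum x => exact hu.sum_col x
  | mismatch a b x y h =>
    simpa only [map_mul, map_zero, FreeAlgebra.lift_ι_apply] using hu.respectsRel h

/-- The universal property of `IsoAlgebra I J rI rJ`: a quantum isomorphism `u` with entries in `A`
is the image of the generators under an algebra homomorphism to `A`. -/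
noncomputable def lift (hu : IsQuantumIso rI rJ u) : IsoAlgebra I J rI rJ →ₐ[ℂ] A :=
  RingQuot.liftAlgHom ℂ
    ⟨FreeAlgebra.lift ℂ (fun i ↦ u i.1 i.2), fun _ _ h ↦ hu.lift_eq_of_isoRel h⟩

lemma lift_isoGen (hu : IsQuantumIso rI rJ u) (a : I) (x : J) :
    hu.lift (isoGen I J rI rJ a x) = u a x := by
  rw [lift, isoGen, RingQuot.liftAlgHom_mkAlgHom_apply, FreeAlgebra.lift_ι_apply]

end IsQuantumIso

theorem stmt16_general (rI : I → I → ℕ) (rJ : J → J → ℕ) (rK : K → K → ℕ) :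
    ∃ Δ : IsoAlgebra I K rI rK →ₐ[ℂ] IsoAlgebra I J rI rJ ⊗[ℂ] IsoAlgebra J K rJ rK,
      ∀ a x, Δ (isoGen I K rI rK a x) =
        ∑ s, isoGen I J rI rJ a s ⊗ₜ[ℂ] isoGen J K rJ rK s x :=
  have hΔ := (isQuantumIso_isoGen rI rJ).tmul (R := ℂ) (isQuantumIso_isoGen rJ rK)
  ⟨hΔ.lift, hΔ.lift_isoGen⟩

end IsoAlgebra

theorem stmt16 {α β γ : Type*} [Fintype α] [Fintype β] [Fintype γ]
    [DecidableEq α] [DecidableEq β] [DecidableEq γ]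
    (L : PreMatroid α) (M : PreMatroid β) (N : PreMatroid γ)
    (hL : L.IsMatroid) (hM : M.IsMatroid) (hN : N.IsMatroid)
    (S_L : Finset (Finset α)) (S_M : Finset (Finset β)) (S_N : Finset (Finset γ))
    (hSL : ∀ A ∈ S_L, A ⊆ L.E) (hSM : ∀ A ∈ S_M, A ⊆ M.E) (hSN : ∀ A ∈ S_N, A ⊆ N.E) :
    ∃ Δ : MatIsoAlgebra S_L S_N →ₐ[ℂ]
        (MatIsoAlgebra S_L S_M ⊗[ℂ] MatIsoAlgebra S_M S_N),
      ∀ (a : PtSet S_L) (x : PtSet S_N),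
        Δ (matGen S_L S_N a x) =
          ∑ s : PtSet S_M, matGen S_L S_M a s ⊗ₜ[ℂ] matGen S_M S_N s x :=
  stmt16_general (ptRel S_L) (ptRel S_M) (ptRel S_N)

end MatroidGame
end

section
/- Let M be a matroid with a collection S_M ⊆ 2^{E(M)} such that S_M covers M, and suppose that for every bijection φ : E(M) → E(M): φ is a matroid automorphism of M if and only if (A ∈ S_M if and only if φ(A) ∈ S_M, for all A ⊆ E(M)). Let Aut•(M,S) be the group of permutations of S•(M) of the form (A,p) ↦ (φ(A), φ(p)) for matroid automorphisms φ of M. Then the quotient of the algebra 𝔄(M,S) by the two-sided ideal generated by all commutators u_{ax}u_{by} − u_{by}u_{ax} is isomorphic, as a unital ℂ-algebra, to the algebra of all ℂ-valued functions on the finite group Aut•(M,S) with pointwise operations. -/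
open scoped BigOperators TensorProduct

namespace MatroidGame

open PreMatroid

/-- The commutator relations on the quantum automorphism algebra `𝔄(M,S)`. -/
inductive CommRel {α : Type*} [Fintype α] [DecidableEq α] (S : Finset (Finset α)) :
    MatIsoAlgebra S S → MatIsoAlgebra S S → Prop
  | comm (a b x y : PtSet S) :
      CommRel S (matGen S S a x * matGen S S b y) (matGen S S b y * matGen S S a x)

/-- The permutations of `S•(M)` induced by matroid automorphisms of `M`. -/
def autPt {α : Type*} [Fintype α] [DecidableEq α] (M : PreMatroid α)
    (S : Finset (Finset α)) : Set (Equiv.Perm (PtSet S)) :=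
  {π | ∃ φ : α → α, M.IsIsoMap M φ ∧
    ∀ v : PtSet S, (π v).val = (v.val.1.image φ, φ v.val.2)}

/-!
In a commutative algebra the entries of a magic unitary `u : I → J → A` are commuting projections,
so the products `∏ a, u a (f a)`, over the functions `f : I → J`, form a partition of unity. Such a
product absorbs each of its factors, hence it vanishes as soon as two of them annihilate each other,
and by the column sums it vanishes when `f` misses a column; only the relation-preserving bijections
survive. Evaluation at these is injective because `u a x` acts on the idempotent of `π` as the
scalar `[π a = x]`, and surjective because the idempotents are sent to the point masses.

A permutation `π` of the pointed sets preserves `rel` exactly when `S_{π v}` depends only on `S_v`,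
`p_{π v}` only on `p_v`, and likewise for `π⁻¹`. The map `p_v ↦ p_{π v}`, extended by the identity
off `⋃ S`, is then a bijection of the ground set which permutes `S` and induces `π`.
-/

section MagicUnitary

variable {I J A B : Type*} [Fintype I] [Fintype J]

/-- A magic unitary with rows `I` and columns `J`: a matrix of idempotents in which distinct entries
of a row or a column annihilate each other and every row and column sums to one. No involution is
assumed, as for the algebras `𝔖(I,J)`. -/
structure IsMagicUnitary [Semiring A] (u : I → J → A) : Prop where
  mul_self (a : I) (x : J) : u a x * u a x = u a x
  row_mul_eq_zero (a : I) {x y : J} (h : x ≠ y) : u a x * u a y = 0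
  col_mul_eq_zero {a b : I} (x : J) (h : a ≠ b) : u a x * u b x = 0
  row_sum (a : I) : ∑ x, u a x = 1
  col_sum (x : J) : ∑ a, u a x = 1

/-- A magic unitary whose entries satisfy the mismatch relations of `IsoAlgebra I J rI rJ`. -/
structure IsRelMagicUnitary [Semiring A] (rI : I → I → ℕ) (rJ : J → J → ℕ) (u : I → J → A) : Prop
    extends IsMagicUnitary u where
  mul_eq_zero_of_rel_ne {a b : I} {x y : J} (h : rI a b ≠ rJ x y) : u a x * u b y = 0

variable {rI : I → I → ℕ} {rJ : J → J → ℕ} {u : I → J → A}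

theorem IsRelMagicUnitary.map [Semiring A] [Semiring B] (hu : IsRelMagicUnitary rI rJ u)
    (f : A →+* B) : IsRelMagicUnitary rI rJ fun a x => f (u a x) where
  mul_self a x := by rw [← map_mul, hu.mul_self]
  row_mul_eq_zero a _ _ h := by rw [← map_mul, hu.row_mul_eq_zero a h, map_zero]
  col_mul_eq_zero x h := by rw [← map_mul, hu.col_mul_eq_zero x h, map_zero]
  row_sum a := by rw [← map_sum, hu.row_sum, map_one]
  col_sum x := by rw [← map_sum, hu.col_sum, map_one]
  mul_eq_zero_of_rel_ne h := by rw [← map_mul, hu.mul_eq_zero_of_rel_ne h, map_zero]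

theorem isRelMagicUnitary_isoGen (rI : I → I → ℕ) (rJ : J → J → ℕ) :
    IsRelMagicUnitary rI rJ (isoGen I J rI rJ) where
  mul_self a x := by
    simpa only [isoGen, map_mul] using RingQuot.mkAlgHom_rel ℂ (IsoRel.magic (.idem a x))
  row_mul_eq_zero a _ _ h := by
    simpa only [isoGen, map_mul, map_zero] using RingQuot.mkAlgHom_rel ℂ (IsoRel.magic (.row a h))
  col_mul_eq_zero x h := by
    simpa only [isoGen, map_mul, map_zero] using RingQuot.mkAlgHom_rel ℂ (IsoRel.magic (.col x h))
  row_sum a := by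
    simpa only [isoGen, map_sum, map_one] using RingQuot.mkAlgHom_rel ℂ (IsoRel.magic (.rowSum a))
  col_sum x := by
    simpa only [isoGen, map_sum, map_one] using RingQuot.mkAlgHom_rel ℂ (IsoRel.magic (.colSum x))
  mul_eq_zero_of_rel_ne h := by
    simpa only [isoGen, map_mul, map_zero] using RingQuot.mkAlgHom_rel ℂ (IsoRel.mismatch _ _ _ _ h)

theorem IsRelMagicUnitary.lift_eq_of_isoRel [Semiring A] [Algebra ℂ A]
    (hu : IsRelMagicUnitary rI rJ u) {s t : FreeAlgebra ℂ (I × J)} (h : IsoRel I J rI rJ s t) :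
    FreeAlgebra.lift ℂ (Function.uncurry u) s = FreeAlgebra.lift ℂ (Function.uncurry u) t := by
  obtain h | ⟨_, _, _, _, h⟩ := h
  · cases h with
    | idem a x => simp [hu.mul_self]
    | row a h => simp [hu.row_mul_eq_zero a h]
    | col x h => simp [hu.col_mul_eq_zero x h]
    | rowSum a => simp [hu.row_sum]
    | colSum x => simp [hu.col_sum]
  · simp [hu.mul_eq_zero_of_rel_ne h]

/-- The universal property of the isomorphism algebra: the homomorphism sending `u_{a x}` to the
`(a, x)` entry of a given magic unitary. -/
noncomputable def IsRelMagicUnitary.lift [Semiring A] [Algebra ℂ A]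
    (hu : IsRelMagicUnitary rI rJ u) : IsoAlgebra I J rI rJ →ₐ[ℂ] A :=
  RingQuot.liftAlgHom ℂ ⟨FreeAlgebra.lift ℂ (Function.uncurry u), fun _ _ => hu.lift_eq_of_isoRel⟩

theorem IsRelMagicUnitary.lift_isoGen [Semiring A] [Algebra ℂ A] (hu : IsRelMagicUnitary rI rJ u)
    (a : I) (x : J) : hu.lift (isoGen I J rI rJ a x) = u a x := by
  rw [lift, isoGen, RingQuot.liftAlgHom_mkAlgHom_apply, FreeAlgebra.lift_ι_apply,
    Function.uncurry_apply_pair]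

theorem adjoin_range_isoGen (rI : I → I → ℕ) (rJ : J → J → ℕ) :
    Algebra.adjoin ℂ (Set.range (Function.uncurry (isoGen I J rI rJ))) = ⊤ := by
  have hrange : Set.range (Function.uncurry (isoGen I J rI rJ)) =
      RingQuot.mkAlgHom ℂ (IsoRel I J rI rJ) '' Set.range (FreeAlgebra.ι ℂ) :=
    Set.range_comp _ _
  rw [hrange, ← AlgHom.map_adjoin, FreeAlgebra.adjoin_range_ι, Algebra.map_top,
    AlgHom.range_eq_top]
  exact RingQuot.mkAlgHom_surjective ℂ _

end MagicUnitary

section RelEquivs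

variable {I J : Type*} {rI : I → I → ℕ} {rJ : J → J → ℕ}

/-- The bijections that carry the relation `rI` to the relation `rJ`; these are the classical points
of `IsoAlgebra I J rI rJ`. -/
def relEquivs (rI : I → I → ℕ) (rJ : J → J → ℕ) : Set (I ≃ J) :=
  {π | ∀ a b, rI a b = rJ (π a) (π b)}

theorem symm_mem_relEquivs {π : I ≃ J} (hπ : π ∈ relEquivs rI rJ) : π.symm ∈ relEquivs rJ rI :=
  fun x y => by
    rw [hπ, π.apply_symm_apply, π.apply_symm_apply]

/-- The function `π ↦ [π a = x]` on a set `G` of bijections, that is, the `(a, x)` entry of the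
permutation matrix of `π`. -/
def matrixEntry [DecidableEq J] (K : Type*) [Zero K] [One K] (G : Set (I ≃ J)) (a : I) (x : J) :
    G → K :=
  fun π => if π.1 a = x then 1 else 0

theorem isRelMagicUnitary_matrixEntry [Fintype I] [Fintype J] [DecidableEq J] (K : Type*)
    [Semiring K] (rI : I → I → ℕ) (rJ : J → J → ℕ) :
    IsRelMagicUnitary rI rJ (matrixEntry K (relEquivs rI rJ)) where
  mul_self a x := by
    ext
    simp only [matrixEntry, Pi.mul_apply, ite_zero_mul_ite_zero, and_self, mul_one]
  row_mul_eq_zero a x y h := by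
    ext
    simp only [matrixEntry, Pi.mul_apply, Pi.zero_apply]
    grind
  col_mul_eq_zero x h := by
    ext π
    have hπ := π.1.injective.ne h
    simp only [matrixEntry, Pi.mul_apply, Pi.zero_apply]
    grind
  row_sum a := by ext; simp [matrixEntry]
  col_sum x := by
    ext π
    rw [Finset.sum_apply]
    exact (π.1.sum_comp fun y => if y = x then 1 else 0).trans (by simp)
  mul_eq_zero_of_rel_ne {a b x y} h := by
    ext π
    have hπ := π.2 a b
    simp only [matrixEntry, Pi.mul_apply, Pi.zero_apply]
    grind

end RelEquivs

section GraphProd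

variable {I J A : Type*} [Fintype I]

/-- The product of the entries of the matrix `u` along the graph of `f`. For a commuting magic
unitary it is the idempotent on which `u` is the matrix of `f`. -/
def graphProd [CommMonoid A] (u : I → J → A) (f : I → J) : A := ∏ a, u a (f a)

theorem graphProd_matrixEntry [DecidableEq J] {K : Type*} [CommSemiring K] {G : Set (I ≃ J)}
    [DecidableEq G] (π : G) : graphProd (matrixEntry K G) π.1 = Pi.single π 1 := by
  ext σ
  rw [graphProd, Finset.prod_apply]
  obtain rfl | hne := eq_or_ne σ π
  · simp [matrixEntry]
  · obtain ⟨a, ha⟩ : ∃ a, σ.1 a ≠ π.1 a := by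
      by_contra! heq
      exact hne (Subtype.ext (Equiv.ext heq))
    rw [Pi.single_eq_of_ne hne]
    exact Finset.prod_eq_zero (Finset.mem_univ a) (if_neg ha)

variable [Fintype J] [CommSemiring A] {u : I → J → A} {f : I → J}

namespace IsMagicUnitary

theorem mul_graphProd [DecidableEq J] (hu : IsMagicUnitary u) (f : I → J) (a : I) (x : J) :
    u a x * graphProd u f = if f a = x then graphProd u f else 0 := by
  classical
  rw [graphProd, ← Finset.mul_prod_erase _ _ (Finset.mem_univ a), ← mul_assoc]
  split_ifs with h
  · rw [h, hu.mul_self]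
  · rw [hu.row_mul_eq_zero a (Ne.symm h), zero_mul]

theorem graphProd_eq_zero_of_mul_eq_zero (hu : IsMagicUnitary u) {a b : I}
    (h : u a (f a) * u b (f b) = 0) : graphProd u f = 0 := by
  classical
  calc graphProd u f = u a (f a) * (u b (f b) * graphProd u f) := by simp [hu.mul_graphProd]
    _ = 0 := by rw [← mul_assoc, h, zero_mul]

theorem injective_of_graphProd_ne_zero (hu : IsMagicUnitary u) (h : graphProd u f ≠ 0) :
    Function.Injective f := fun a b hab => by
  contrapose! h
  exact hu.graphProd_eq_zero_of_mul_eq_zero (a := a) (b := b) (by rw [hab, hu.col_mul_eq_zero _ h])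

theorem surjective_of_graphProd_ne_zero (hu : IsMagicUnitary u) (h : graphProd u f ≠ 0) :
    Function.Surjective f := fun x => by
  classical
  contrapose! h
  calc graphProd u f = (∑ a, u a x) * graphProd u f := by rw [hu.col_sum, one_mul]
    _ = 0 := by simp [Finset.sum_mul, hu.mul_graphProd, h]

theorem mul_graphProd_eq_smul {K : Type*} [DecidableEq J] [CommSemiring K] [Algebra K A]
    (hu : IsMagicUnitary u) (hgen : Algebra.adjoin K (Set.range (Function.uncurry u)) = ⊤)
    {G : Set (I ≃ J)} {F : A →ₐ[K] (G → K)} (hF : ∀ a x, F (u a x) = matrixEntry K G a x)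
    (c : A) (π : G) : c * graphProd u π.1 = F c π • graphProd u π.1 := by
  have hc : c ∈ Algebra.adjoin K (Set.range (Function.uncurry u)) := hgen ▸ Algebra.mem_top
  induction hc using Algebra.adjoin_induction with
  | mem _ h =>
    obtain ⟨⟨a, x⟩, rfl⟩ := h
    simp [hF, matrixEntry, hu.mul_graphProd]
  | algebraMap r => simp [Algebra.smul_def]
  | add c d _ _ hc hd => rw [add_mul, hc, hd, map_add, Pi.add_apply, add_smul]
  | mul c d _ _ hc hd =>
    rw [mul_assoc, hd, mul_smul_comm, hc, smul_smul, map_mul, Pi.mul_apply, mul_comm]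

end IsMagicUnitary

namespace IsRelMagicUnitary

variable {rI : I → I → ℕ} {rJ : J → J → ℕ}

theorem exists_mem_relEquivs_of_graphProd_ne_zero (hu : IsRelMagicUnitary rI rJ u)
    (h : graphProd u f ≠ 0) : ∃ π ∈ relEquivs rI rJ, ⇑π = f := by
  refine ⟨.ofBijective f ⟨hu.injective_of_graphProd_ne_zero h,
    hu.surjective_of_graphProd_ne_zero h⟩, fun a b => ?_, rfl⟩
  by_contra hab
  exact h (hu.graphProd_eq_zero_of_mul_eq_zero (hu.mul_eq_zero_of_rel_ne hab))

theorem sum_graphProd (hu : IsRelMagicUnitary rI rJ u) [Fintype (relEquivs rI rJ)] :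
    ∑ π : relEquivs rI rJ, graphProd u π.1 = 1 := by
  classical
  calc ∑ π : relEquivs rI rJ, graphProd u π.1
      = ∑ f : I → J, graphProd u f := by
        refine Fintype.sum_of_injective (fun π : relEquivs rI rJ => ⇑π.1)
          (DFunLike.coe_injective.comp Subtype.val_injective) _ _ (fun f hf => ?_) fun _ => rfl
        contrapose! hf
        obtain ⟨π, hπ, rfl⟩ := hu.exists_mem_relEquivs_of_graphProd_ne_zero hf
        exact ⟨⟨π, hπ⟩, rfl⟩
    _ = ∏ a, ∑ x, u a x := (Fintype.prod_sum u).symm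
    _ = 1 := by simp [hu.row_sum]

theorem bijective_of_apply_eq_matrixEntry {K : Type*} [DecidableEq J] [CommSemiring K] [Algebra K A]
    (hu : IsRelMagicUnitary rI rJ u)
    (hgen : Algebra.adjoin K (Set.range (Function.uncurry u)) = ⊤)
    {F : A →ₐ[K] (relEquivs rI rJ → K)}
    (hF : ∀ a x, F (u a x) = matrixEntry K (relEquivs rI rJ) a x) : Function.Bijective F := by
  classical
  have expand (c : A) : c = ∑ π, F c π • graphProd u π.1 := by
    simp_rw [← hu.mul_graphProd_eq_smul hgen hF c, ← Finset.mul_sum, hu.sum_graphProd, mul_one]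
  have apply_graphProd (π : relEquivs rI rJ) : F (graphProd u π.1) = Pi.single π 1 := by
    simp_rw [← graphProd_matrixEntry, graphProd, map_prod, hF]
  refine ⟨fun c d hcd => ?_, fun g => ⟨∑ π, g π • graphProd u π.1, ?_⟩⟩
  · rw [expand c, hcd, ← expand d]
  · ext σ
    simp [apply_graphProd, Finset.sum_apply, Pi.single_apply]

end IsRelMagicUnitary

end GraphProd

section CommQuotient

variable {α : Type*} [Fintype α] [DecidableEq α] (S : Finset (Finset α))

/-- The image of the generator `u_{a x}` in the commutative quotient of `𝔄(M,S)`. -/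
noncomputable def commGen (a x : PtSet S) : RingQuot (CommRel S) :=
  RingQuot.mkAlgHom ℂ (CommRel S) (matGen S S a x)

theorem isRelMagicUnitary_commGen : IsRelMagicUnitary (ptRel S) (ptRel S) (commGen S) :=
  (isRelMagicUnitary_isoGen _ _).map (RingQuot.mkAlgHom ℂ (CommRel S)).toRingHom

theorem adjoin_range_commGen :
    Algebra.adjoin ℂ (Set.range (Function.uncurry (commGen S))) = ⊤ := by
  have hrange : Set.range (Function.uncurry (commGen S)) =
      RingQuot.mkAlgHom ℂ (CommRel S) '' Set.range (Function.uncurry (matGen S S)) :=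
    Set.range_comp _ _
  rw [hrange, ← AlgHom.map_adjoin]
  refine (congrArg _ (adjoin_range_isoGen _ _)).trans ?_
  rw [Algebra.map_top, AlgHom.range_eq_top]
  exact RingQuot.mkAlgHom_surjective ℂ _

theorem commGen_mul_comm (a b x y : PtSet S) :
    commGen S a x * commGen S b y = commGen S b y * commGen S a x := by
  simpa only [commGen, map_mul] using RingQuot.mkAlgHom_rel ℂ (CommRel.comm a b x y)

noncomputable instance : CommRing (RingQuot (CommRel S)) where
  mul_comm c d := by
    have hcomm : ∀ c ∈ Set.range (Function.uncurry (commGen S)),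
        ∀ d ∈ Set.range (Function.uncurry (commGen S)), c * d = d * c := by
      rintro _ ⟨⟨a, x⟩, rfl⟩ _ ⟨⟨b, y⟩, rfl⟩
      exact commGen_mul_comm S a b x y
    have := Algebra.isMulCommutative_adjoin ℂ hcomm
    have hmem (c : RingQuot (CommRel S)) :
        c ∈ Algebra.adjoin ℂ (Set.range (Function.uncurry (commGen S))) :=
      adjoin_range_commGen S ▸ Algebra.mem_top
    exact setLike_mul_comm (hmem c) (hmem d)

/-- Evaluation of the commutative quotient of `𝔄(M,S)` at the `rel`-preserving permutations. -/
noncomputable def commEval :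
    RingQuot (CommRel S) →ₐ[ℂ] (relEquivs (ptRel S) (ptRel S) → ℂ) :=
  RingQuot.liftAlgHom ℂ ⟨(isRelMagicUnitary_matrixEntry ℂ (ptRel S) (ptRel S)).lift, by
    rintro _ _ ⟨⟩
    rw [map_mul, map_mul, mul_comm]⟩

theorem commEval_commGen (a x : PtSet S) : commEval S (commGen S a x) = matrixEntry ℂ _ a x := by
  rw [commEval, commGen, RingQuot.liftAlgHom_mkAlgHom_apply]
  exact IsRelMagicUnitary.lift_isoGen _ a x

theorem commEval_bijective : Function.Bijective (commEval S) :=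
  (isRelMagicUnitary_commGen S).bijective_of_apply_eq_matrixEntry (adjoin_range_commGen S)
    (commEval_commGen S)

end CommQuotient

section PointedSets

variable {α : Type*} {S : Finset (Finset α)} {π : Equiv.Perm (PtSet S)}

/-- The self-map `p_v ↦ p_{π v}` of `α` induced by a permutation of the pointed sets,
extended by the identity to the points in no member of `S`. It is only meaningful if `p_{π v}`
depends on `p_v` alone. -/
noncomputable def pointMap (π : Equiv.Perm (PtSet S)) : α → α :=
  Function.extend (fun v => v.val.2) (fun v => (π v).val.2) id

theorem pointMap_of_notMem_range {p : α} (hp : p ∉ Set.range fun v : PtSet S => v.val.2) :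
    pointMap π p = p :=
  Function.extend_apply' _ _ _ hp

variable [DecidableEq α]

theorem relNum_eq_relNum_iff {β : Type*} [DecidableEq β] {a b : Finset α × α}
    {c d : Finset β × β} :
    relNum a b = relNum c d ↔ (a.1 = b.1 ↔ c.1 = d.1) ∧ (a.2 = b.2 ↔ c.2 = d.2) := by
  unfold relNum
  split_ifs <;> simp_all

theorem mem_relEquivs_ptRel_of_injOn {E : Finset α} (hS : ∀ A ∈ S, A ⊆ E) {φ : α → α}
    (hφ : Set.InjOn φ E) (h : ∀ v, (π v).val = (v.val.1.image φ, φ v.val.2)) :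
    π ∈ relEquivs (ptRel S) (ptRel S) := fun a b => by
  have ha := hS _ a.2.1
  have hb := hS _ b.2.1
  rw [relNum_eq_relNum_iff, h, h]
  exact ⟨((Finset.image_injOn_powerset_of_injOn hφ).eq_iff (by simpa using ha)
    (by simpa using hb)).symm, (hφ.eq_iff (ha a.2.2) (hb b.2.2)).symm⟩

theorem fst_apply_eq_fst_apply_iff (hπ : π ∈ relEquivs (ptRel S) (ptRel S)) (v w : PtSet S) :
    (π v).val.1 = (π w).val.1 ↔ v.val.1 = w.val.1 :=
  (relNum_eq_relNum_iff.1 (hπ v w)).1.symm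

theorem pointMap_snd (hπ : π ∈ relEquivs (ptRel S) (ptRel S)) (v : PtSet S) :
    pointMap π v.val.2 = (π v).val.2 :=
  Function.FactorsThrough.extend_apply (fun v w => (relNum_eq_relNum_iff.1 (hπ v w)).2.1) id v

theorem leftInverse_pointMap_symm (hπ : π ∈ relEquivs (ptRel S) (ptRel S)) :
    Function.LeftInverse (pointMap π.symm) (pointMap π) := fun p => by
  by_cases hp : p ∈ Set.range fun v : PtSet S => v.val.2
  · obtain ⟨v, rfl⟩ := hp
    rw [pointMap_snd hπ, pointMap_snd (symm_mem_relEquivs hπ), π.symm_apply_apply]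
  · rw [pointMap_of_notMem_range hp, pointMap_of_notMem_range hp]

theorem mapsTo_pointMap (hπ : π ∈ relEquivs (ptRel S) (ptRel S)) {E : Finset α}
    (hS : ∀ A ∈ S, A ⊆ E) : Set.MapsTo (pointMap π) E E := fun p hpE => by
  by_cases hp : p ∈ Set.range fun v : PtSet S => v.val.2
  · obtain ⟨v, rfl⟩ := hp
    rw [pointMap_snd hπ]
    exact hS _ (π v).2.1 (π v).2.2
  · rwa [pointMap_of_notMem_range hp]

theorem bijOn_pointMap (hπ : π ∈ relEquivs (ptRel S) (ptRel S)) {E : Finset α}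
    (hS : ∀ A ∈ S, A ⊆ E) : Set.BijOn (pointMap π) E E :=
  Set.InvOn.bijOn ⟨(leftInverse_pointMap_symm hπ).leftInvOn _,
    (leftInverse_pointMap_symm (symm_mem_relEquivs hπ)).leftInvOn _⟩
    (mapsTo_pointMap hπ hS) (mapsTo_pointMap (symm_mem_relEquivs hπ) hS)

theorem image_pointMap_subset (hπ : π ∈ relEquivs (ptRel S) (ptRel S)) (v : PtSet S) :
    v.val.1.image (pointMap π) ⊆ (π v).val.1 := by
  refine Finset.image_subset_iff.2 fun p hp => ?_
  let w : PtSet S := ⟨(v.val.1, p), v.2.1, hp⟩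
  have hw : (π w).val.1 = (π v).val.1 := (fst_apply_eq_fst_apply_iff hπ w v).2 rfl
  rw [← hw, pointMap_snd hπ w]
  exact (π w).2.2

theorem image_pointMap (hπ : π ∈ relEquivs (ptRel S) (ptRel S)) (v : PtSet S) :
    v.val.1.image (pointMap π) = (π v).val.1 := by
  refine (image_pointMap_subset hπ v).antisymm fun q hq => Finset.mem_image.2
    ⟨pointMap π.symm q, ?_, leftInverse_pointMap_symm (symm_mem_relEquivs hπ) q⟩
  have hsub := image_pointMap_subset (symm_mem_relEquivs hπ) (π v)
  rw [π.symm_apply_apply] at hsub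
  exact hsub (Finset.mem_image_of_mem _ hq)

theorem image_pointMap_mem (hπ : π ∈ relEquivs (ptRel S) (ptRel S)) {A : Finset α} (hA : A ∈ S) :
    A.image (pointMap π) ∈ S := by
  obtain rfl | ⟨p, hp⟩ := A.eq_empty_or_nonempty
  · simpa using hA
  · rw [image_pointMap hπ ⟨(A, p), hA, hp⟩]
    exact (π _).2.1

theorem image_pointMap_mem_iff (hπ : π ∈ relEquivs (ptRel S) (ptRel S)) {A : Finset α} :
    A.image (pointMap π) ∈ S ↔ A ∈ S := by
  refine ⟨fun hA => ?_, image_pointMap_mem hπ⟩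
  simpa [Finset.image_image, (leftInverse_pointMap_symm hπ).comp_eq_id] using
    image_pointMap_mem (symm_mem_relEquivs hπ) hA

theorem autPt_eq_relEquivs [Fintype α] {M : PreMatroid α} (hS : ∀ A ∈ S, A ⊆ M.E)
    (hdet : ∀ φ : α → α, Set.BijOn φ ↑M.E ↑M.E →
      (∀ A : Finset α, A ⊆ M.E → (A ∈ S ↔ A.image φ ∈ S)) → M.IsIsoMap M φ) :
    autPt M S = relEquivs (ptRel S) (ptRel S) := by
  ext π
  constructor
  · rintro ⟨φ, hφ, h⟩
    exact mem_relEquivs_ptRel_of_injOn hS hφ.1.injOn h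
  · intro hπ
    exact ⟨pointMap π, hdet _ (bijOn_pointMap hπ hS) fun A _ => (image_pointMap_mem_iff hπ).symm,
      fun v => Prod.ext (image_pointMap hπ v).symm (pointMap_snd hπ v).symm⟩

end PointedSets

theorem stmt17_general {α : Type*} [Fintype α] [DecidableEq α]
    (M : PreMatroid α) (S : Finset (Finset α)) (hS : ∀ A ∈ S, A ⊆ M.E)
    (hdet : ∀ φ : α → α, Set.BijOn φ ↑M.E ↑M.E →
      (∀ A : Finset α, A ⊆ M.E → (A ∈ S ↔ A.image φ ∈ S)) → M.IsIsoMap M φ) :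
    Nonempty (RingQuot (CommRel S) ≃ₐ[ℂ] (↥(autPt M S) → ℂ)) := by
  rw [autPt_eq_relEquivs hS hdet]
  exact ⟨.ofBijective (commEval S) (commEval_bijective S)⟩

theorem stmt17 {α : Type*} [Fintype α] [DecidableEq α]
    (M : PreMatroid α) (hM : M.IsMatroid)
    (S : Finset (Finset α)) (hS : ∀ A ∈ S, A ⊆ M.E) (hcov : Covers S M.E)
    (hdet : ∀ φ : α → α, Set.BijOn φ ↑M.E ↑M.E →
      (M.IsIsoMap M φ ↔ ∀ A : Finset α, A ⊆ M.E → (A ∈ S ↔ A.image φ ∈ S))) :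
    Nonempty (RingQuot (CommRel S) ≃ₐ[ℂ] (↥(autPt M S) → ℂ)) :=
  stmt17_general M S hS fun φ hφ => (hdet φ hφ).2

end MatroidGame
end

section
/- Let M be a matroid with a collection S_M ⊆ 2^{E(M)} covering M. Suppose there are distinct elements a, b, c, d ∈ E(M) and members A, B ∈ S_M with a, b ∈ A and c, d ∈ B, such that no member of S_M other than A contains a or b, and no member of S_M other than B contains c or d. Then the permutations of S•(M) induced by the transpositions a ↔ b and c ↔ d of E(M) (sending (C,p) to (σ(C), σ(p)) for the respective transposition σ) are disjoint non-identity permutations of S•(M) preserving rel_M, and consequently the algebra 𝔄(M,S) is noncommutative. -/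
open scoped BigOperators TensorProduct

namespace MatroidGame

open PreMatroid

/-!
For an idempotent `e` and an automorphism `π` of `(I, r)`, the matrix `e + (1 - e) π` is a magic
unitary compatible with `r`. Let `π` and `τ` be disjoint automorphisms and `s = π τ`. Give the
points moved by `π` the weight `e` and all other points the weight `f`, another idempotent. Each
row and column of the mixture of `1` and `s` with these weights involves only one of `e` and `f`,
because weights are constant on the orbits of `s`; so the mixture is still a magic unitary.
Entries with different weights need not annihilate each other, and no relation asks them to: if
exactly one of `x` and `y` is moved by `π`, then applying `s` to only one of them preserves `r x y`.
Hence the isomorphism algebra has a representation with `e` and `f` in its image, for any two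
idempotents, in particular for two which do not commute.
-/

section Lift

variable {I J R : Type*} [Fintype I] [Fintype J] [Ring R]

/-- A magic unitary with entries in `R`, in the algebraic sense of the defining relations of
`𝔖(I,J)`: there is no adjoint, the entries are merely idempotents. -/
structure IsMagicUnitary_s19 (u : I → J → R) : Prop where
  idem (a : I) (x : J) : IsIdempotentElem (u a x)
  row (a : I) {x y : J} (h : x ≠ y) : u a x * u a y = 0
  col {a b : I} (x : J) (h : a ≠ b) : u a x * u b x = 0
  rowSum (a : I) : ∑ x, u a x = 1
  colSum (x : J) : ∑ a, u a x = 1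

theorem exists_isoAlgebra_algHom [Algebra ℂ R] {u : I → J → R} (hu : IsMagicUnitary_s19 u)
    {rI : I → I → ℕ} {rJ : J → J → ℕ}
    (hr : ∀ a b x y, rI a b ≠ rJ x y → u a x * u b y = 0) :
    ∃ φ : IsoAlgebra I J rI rJ →ₐ[ℂ] R, ∀ a x, φ (isoGen I J rI rJ a x) = u a x := by
  let ψ : FreeAlgebra ℂ (I × J) →ₐ[ℂ] R := FreeAlgebra.lift ℂ fun p => u p.1 p.2
  have hψ (a : I) (x : J) : ψ (FreeAlgebra.ι ℂ (a, x)) = u a x := FreeAlgebra.lift_ι_apply _ _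
  have hmagic {p q : FreeAlgebra ℂ (I × J)} (h : MagicRel I J p q) : ψ p = ψ q := by
    cases h with
    | idem a x => simpa only [map_mul, hψ] using (hu.idem a x).eq
    | row a h => simpa only [map_mul, map_zero, hψ] using hu.row a h
    | col x h => simpa only [map_mul, map_zero, hψ] using hu.col x h
    | rowSum a => simpa only [map_sum, map_one, hψ] using hu.rowSum a
    | colSum x => simpa only [map_sum, map_one, hψ] using hu.colSum x
  have hiso {p q : FreeAlgebra ℂ (I × J)} (h : IsoRel I J rI rJ p q) : ψ p = ψ q := by
    cases h with
    | magic h => exact hmagic h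
    | mismatch a b x y h => simpa only [map_mul, map_zero, hψ] using hr a b x y h
  refine ⟨RingQuot.liftAlgHom ℂ ⟨ψ, fun _ _ => hiso⟩, fun a x => ?_⟩
  rw [isoGen, RingQuot.liftAlgHom_mkAlgHom_apply, hψ]

end Lift

section Mixture

variable {I R : Type*} [Ring R]

/-- The image of the pair of truth values `(p, q)` in `ℂ × ℂ` under the linear map to `R` sending
`(1, 0)` to `e` and `(0, 1)` to `1 - e`; it is multiplicative when `e` is idempotent. -/
def idemMix (e : R) (p q : Prop) [Decidable p] [Decidable q] : R :=
  (if p then e else 0) + (if q then 1 - e else 0)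

theorem idemMix_of_not (e : R) {p q : Prop} [Decidable p] [Decidable q] (hp : ¬p) (hq : ¬q) :
    idemMix e p q = 0 := by
  rw [idemMix, if_neg hp, if_neg hq, add_zero]

theorem idemMix_mul_idemMix {e : R} (he : IsIdempotentElem e) (p q p' q' : Prop)
    [Decidable p] [Decidable q] [Decidable p'] [Decidable q'] :
    idemMix e p q * idemMix e p' q' = idemMix e (p ∧ p') (q ∧ q') := by
  by_cases p <;> by_cases q <;> by_cases p' <;> by_cases q' <;>
    simp [idemMix, he.eq, he.one_sub.eq, he.mul_one_sub_self, he.one_sub_mul_self, *]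

variable [DecidableEq I]

/-- The mixture of the identity and the permutation `s` in which column `x` takes the identity
with weight `e x` and `s` with weight `1 - e x`. -/
def permMix (s : Equiv.Perm I) (e : I → R) (a x : I) : R :=
  idemMix (e x) (a = x) (a = s x)

variable {s : Equiv.Perm I} {e : I → R}

theorem permMix_apply_row (hs : ∀ x, e (s x) = e x) (a x : I) :
    permMix s e a x = idemMix (e a) (a = x) (a = s x) := by
  unfold permMix idemMix
  congr 1 <;> split_ifs with h <;> simp [h, hs]

theorem eq_or_eq_of_permMix_ne_zero {a x : I} (h : permMix s e a x ≠ 0) : a = x ∨ a = s x := by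
  contrapose! h
  exact idemMix_of_not _ h.1 h.2

theorem isMagicUnitary_permMix [Fintype I] (he : ∀ x, IsIdempotentElem (e x))
    (hs : ∀ x, e (s x) = e x) : IsMagicUnitary_s19 (permMix s e) where
  idem a x := by
    rw [IsIdempotentElem, permMix, idemMix_mul_idemMix (he x)]
    simp only [and_self]
  row a x y h := by
    rw [permMix_apply_row hs, permMix_apply_row hs, idemMix_mul_idemMix (he a)]
    exact idemMix_of_not _ (fun ⟨hx, hy⟩ => h (hx.symm.trans hy))
      (fun ⟨hx, hy⟩ => h (s.injective (hx.symm.trans hy)))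
  col x h := by
    rw [permMix, permMix, idemMix_mul_idemMix (he x)]
    exact idemMix_of_not _ (fun ⟨ha, hb⟩ => h (ha.trans hb.symm))
      (fun ⟨ha, hb⟩ => h (ha.trans hb.symm))
  rowSum a := by
    simp [permMix_apply_row hs, idemMix, Finset.sum_add_distrib, ← Equiv.symm_apply_eq]
  colSum x := by
    simp [permMix, idemMix, Finset.sum_add_distrib]

theorem rel_apply_left_of_rel_apply_right {I β γ : Type*} {s : Equiv.Perm I} {r : I → I → β}
    {e : I → γ} (hs : ∀ x, e (s x) = e x) (hr : ∀ x y, r (s x) (s y) = r x y)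
    (hmix : ∀ x y, e x ≠ e y → r x (s y) = r x y) {x y : I} (h : e x ≠ e y) :
    r (s x) y = r x y := by
  have hy : e (s.symm y) = e y := by rw [← hs, s.apply_symm_apply]
  calc r (s x) y = r x (s.symm y) := by rw [← hr x, s.apply_symm_apply]
    _ = r x y := by rw [← hmix x _ (hy ▸ h), s.apply_symm_apply]

theorem permMix_mul_permMix_eq_zero {β : Type*} {r : I → I → β}
    (he : ∀ x, IsIdempotentElem (e x)) (hs : ∀ x, e (s x) = e x)
    (hr : ∀ x y, r (s x) (s y) = r x y) (hmix : ∀ x y, e x ≠ e y → r x (s y) = r x y)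
    {a b x y : I} (h : r a b ≠ r x y) : permMix s e a x * permMix s e b y = 0 := by
  by_cases hxy : e x = e y
  · rw [permMix, permMix, hxy, idemMix_mul_idemMix (he y)]
    exact idemMix_of_not _ (fun ⟨ha, hb⟩ => h (by rw [ha, hb]))
      (fun ⟨ha, hb⟩ => h (by rw [ha, hb, hr]))
  · by_contra hne
    apply h
    obtain rfl | rfl := eq_or_eq_of_permMix_ne_zero (left_ne_zero_of_mul hne) <;>
      obtain rfl | rfl := eq_or_eq_of_permMix_ne_zero (right_ne_zero_of_mul hne)
    · rfl
    · exact hmix _ _ hxy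
    · exact rel_apply_left_of_rel_apply_right hs hr hmix hxy
    · exact hr _ _

end Mixture

theorem exists_idempotent_matrix_mul_ne (K : Type*) [Semiring K] [Nontrivial K] :
    ∃ e f : Matrix (Fin 2) (Fin 2) K,
      IsIdempotentElem e ∧ IsIdempotentElem f ∧ e * f ≠ f * e := by
  refine ⟨!![1, 0; 0, 0], !![1, 1; 0, 0], ?_, ?_, fun h => ?_⟩
  · simp [IsIdempotentElem, funext_iff, Fin.forall_fin_two]
  · simp [IsIdempotentElem, funext_iff, Fin.forall_fin_two]
  · simpa using congrFun₂ h 0 1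

section Disjoint

open Equiv.Perm

variable {I : Type*} {π τ : Equiv.Perm I}

theorem rel_mul_apply_of_disjoint {β : Type*} {r : I → I → β} (hd : π.Disjoint τ)
    (hπ : ∀ x y, r (π x) (π y) = r x y) (hτ : ∀ x y, r (τ x) (τ y) = r x y) {x y : I}
    (hxy : ¬(π x = x ↔ π y = y)) : r x ((π * τ) y) = r x y := by
  by_cases hx : π x = x
  · have hy : τ y = y := (hd y).resolve_left fun hy => hxy (iff_of_true hx hy)
    rw [mul_apply, hy, ← hπ x y, hx]
  · have hy : π y = y := not_not.mp fun hy => hxy (iff_of_false hx hy)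
    have hx' : τ x = x := (hd x).resolve_left hx
    rw [hd.commute.eq, mul_apply, hy, ← hτ x y, hx']

theorem exists_isoAlgebra_algHom_of_disjoint [Fintype I] {R : Type*} [Ring R] [Algebra ℂ R]
    {r : I → I → ℕ} (hd : π.Disjoint τ) (hπ : ∀ x y, r (π x) (π y) = r x y)
    (hτ : ∀ x y, r (τ x) (τ y) = r x y) {v w : I} (hv : π v ≠ v) (hw : τ w ≠ w)
    {e f : R} (he : IsIdempotentElem e) (hf : IsIdempotentElem f) :
    ∃ φ : IsoAlgebra I I r r →ₐ[ℂ] R,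
      φ (isoGen I I r r v v) = e ∧ φ (isoGen I I r r w w) = f := by
  classical
  let E (x : I) : R := if π x = x then f else e
  have hE (x : I) : IsIdempotentElem (E x) := by unfold E; split_ifs <;> assumption
  have hEs (x : I) : E ((π * τ) x) = E x := by
    have hfix : π ((π * τ) x) = (π * τ) x ↔ π x = x := by
      rw [mul_apply, π.apply_eq_iff_eq, ← mul_apply, hd.commute.eq, mul_apply, τ.apply_eq_iff_eq]
    simp only [E, hfix]
  have hmix (x y : I) (h : E x ≠ E y) : r x ((π * τ) y) = r x y :=
    rel_mul_apply_of_disjoint hd hπ hτ fun hxy => h (by simp only [E, hxy])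
  have hr (x y : I) : r ((π * τ) x) ((π * τ) y) = r x y := (hπ _ _).trans (hτ _ _)
  obtain ⟨φ, hφ⟩ := exists_isoAlgebra_algHom (isMagicUnitary_permMix hE hEs)
    fun a b x y => permMix_mul_permMix_eq_zero hE hEs hr hmix
  have hφ_moved {x : I} (hx : (π * τ) x ≠ x) : φ (isoGen I I r r x x) = E x := by
    rw [hφ, permMix, idemMix, if_pos rfl, if_neg hx.symm, add_zero]
  refine ⟨φ, ?_, ?_⟩
  · exact (hφ_moved fun h => hv (hd.mul_apply_eq_iff.mp h).1).trans (if_neg hv)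
  · exact (hφ_moved fun h => hw (hd.mul_apply_eq_iff.mp h).2).trans
      (if_pos ((hd w).resolve_right hw))

theorem exists_isoAlgebra_mul_ne_of_disjoint [Fintype I] {r : I → I → ℕ} (hd : π.Disjoint τ)
    (hπ_ne : π ≠ 1) (hτ_ne : τ ≠ 1) (hπ : ∀ x y, r (π x) (π y) = r x y)
    (hτ : ∀ x y, r (τ x) (τ y) = r x y) :
    ∃ x y : IsoAlgebra I I r r, x * y ≠ y * x := by
  obtain ⟨v, hv⟩ := DFunLike.ne_iff.mp hπ_ne
  obtain ⟨w, hw⟩ := DFunLike.ne_iff.mp hτ_ne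
  obtain ⟨e, f, he, hf, hef⟩ := exists_idempotent_matrix_mul_ne ℂ
  obtain ⟨φ, hφv, hφw⟩ := exists_isoAlgebra_algHom_of_disjoint hd hπ hτ hv hw he hf
  refine ⟨isoGen I I r r v v, isoGen I I r r w w, fun h => hef ?_⟩
  rw [← hφv, ← hφw, ← map_mul, h, map_mul]

end Disjoint

section PointedSets

instance finite_ptSet {α : Type*} (S : Finset (Finset α)) : Finite (PtSet S) :=
  have := Classical.decEq α
  (S ×ˢ S.biUnion id).finite_toSet.subset fun v hv =>
    Finset.mem_product.mpr ⟨hv.1, Finset.mem_biUnion.mpr ⟨v.1, hv⟩⟩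

variable {α : Type*} [DecidableEq α]

theorem relNum_prodMap {β : Type*} [DecidableEq β] {f : Finset α → Finset β} {g : α → β}
    (hf : f.Injective) (hg : g.Injective) (v w : Finset α × α) :
    relNum (Prod.map f g v) (Prod.map f g w) = relNum v w := by
  simp only [relNum, Prod.map_fst, Prod.map_snd, hf.eq_iff, hg.eq_iff]

variable {S : Finset (Finset α)}

/-- The permutation of `S•` induced by a permutation `σ` of the ground set carrying members of
`S` to members of `S`. -/
noncomputable def ptPerm (σ : Equiv.Perm α) (hσ : ∀ C ∈ S, C.image σ ∈ S) :
    Equiv.Perm (PtSet S) :=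
  Equiv.Perm.subtypePermOfFintype (σ.finsetCongr.prodCongr σ) fun v hv =>
    ⟨by simpa [Finset.map_eq_image] using hσ v.1 hv.1, by simpa using hv.2⟩

variable {σ : Equiv.Perm α}

theorem ptPerm_val (hσ : ∀ C ∈ S, C.image σ ∈ S) (v : PtSet S) :
    (ptPerm σ hσ v).val = (v.val.1.image σ, σ v.val.2) :=
  Prod.ext (Finset.map_eq_image _ _) rfl

theorem relNum_ptPerm (hσ : ∀ C ∈ S, C.image σ ∈ S) (v w : PtSet S) :
    relNum (ptPerm σ hσ v).val (ptPerm σ hσ w).val = relNum v.val w.val := by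
  rw [ptPerm_val, ptPerm_val]
  exact relNum_prodMap (Finset.image_injective σ.injective) σ.injective _ _

theorem ptPerm_ne_one (hσ : ∀ C ∈ S, C.image σ ∈ S) {A : Finset α} {a : α} (hA : A ∈ S)
    (haA : a ∈ A) (ha : σ a ≠ a) : ptPerm σ hσ ≠ 1 := fun h => by
  have hfix := ptPerm_val hσ ⟨(A, a), hA, haA⟩
  rw [h] at hfix
  exact ha (congrArg Prod.snd hfix).symm

theorem disjoint_ptPerm {τ : Equiv.Perm α} (hστ : σ.Disjoint τ) (hσ : ∀ C ∈ S, C.image σ = C)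
    (hτ : ∀ C ∈ S, C.image τ = C) :
    (ptPerm σ fun C hC => (hσ C hC).symm ▸ hC).Disjoint
      (ptPerm (S := S) τ fun C hC => (hτ C hC).symm ▸ hC) := fun v => by
  rw [Subtype.ext_iff, Subtype.ext_iff, ptPerm_val, ptPerm_val, hσ _ v.2.1, hτ _ v.2.1]
  exact (hστ v.val.2).imp (Prod.ext rfl) (Prod.ext rfl)

end PointedSets

theorem image_swap_eq_self {α : Type*} [DecidableEq α] {a b : α} {C : Finset α}
    (h : a ∈ C ↔ b ∈ C) : C.image (Equiv.swap a b) = C :=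
  Finset.eq_of_subset_of_card_le
    (Finset.image_subset_iff.mpr fun x hx => by
      rw [Equiv.swap_apply_def]
      split_ifs with hxa hxb
      · exact h.mp (hxa ▸ hx)
      · exact h.mpr (hxb ▸ hx)
      · exact hx)
    (Finset.card_image_of_injective _ (Equiv.injective _)).ge

theorem image_swap_eq_self_of_mem_unique {α : Type*} [DecidableEq α] {S : Finset (Finset α)}
    {A : Finset α} {a b : α} (ha : a ∈ A) (hb : b ∈ A) (honly : ∀ C ∈ S, C ≠ A → a ∉ C ∧ b ∉ C) :
    ∀ C ∈ S, C.image (Equiv.swap a b) = C := fun C hC => by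
  apply image_swap_eq_self
  obtain rfl | hne := eq_or_ne C A
  · exact iff_of_true ha hb
  · exact iff_of_false (honly C hC hne).1 (honly C hC hne).2

theorem stmt19_general {α : Type*} [DecidableEq α] {S : Finset (Finset α)} [Fintype (PtSet S)]
    {σ ρ : Equiv.Perm α} (hd : σ.Disjoint ρ) (hσ : ∀ C ∈ S, C.image σ = C)
    (hρ : ∀ C ∈ S, C.image ρ = C) {A B : Finset α} {a c : α} (hA : A ∈ S) (hB : B ∈ S)
    (haA : a ∈ A) (hcB : c ∈ B) (ha : σ a ≠ a) (hc : ρ c ≠ c) :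
    (∃ π τ : Equiv.Perm (PtSet S),
      (∀ v : PtSet S, (π v).val = (v.val.1.image σ, σ v.val.2)) ∧
      (∀ v : PtSet S, (τ v).val = (v.val.1.image ρ, ρ v.val.2)) ∧
      π ≠ 1 ∧ τ ≠ 1 ∧
      (∀ v w : PtSet S, relNum (π v).val (π w).val = relNum v.val w.val) ∧
      (∀ v w : PtSet S, relNum (τ v).val (τ w).val = relNum v.val w.val) ∧
      (∀ v : PtSet S, (π v ≠ v → τ v = v) ∧ (τ v ≠ v → π v = v))) ∧
    ∃ x y : IsoAlgebra (PtSet S) (PtSet S) (ptRel S) (ptRel S), x * y ≠ y * x := by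
  have hσS : ∀ C ∈ S, C.image σ ∈ S := fun C hC => (hσ C hC).symm ▸ hC
  have hρS : ∀ C ∈ S, C.image ρ ∈ S := fun C hC => (hρ C hC).symm ▸ hC
  have hdisj : (ptPerm σ hσS).Disjoint (ptPerm ρ hρS) := disjoint_ptPerm hd hσ hρ
  have hπ : ptPerm σ hσS ≠ 1 := ptPerm_ne_one hσS hA haA ha
  have hτ : ptPerm ρ hρS ≠ 1 := ptPerm_ne_one hρS hB hcB hc
  refine ⟨⟨ptPerm σ hσS, ptPerm ρ hρS, ptPerm_val hσS, ptPerm_val hρS, hπ, hτ,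
    relNum_ptPerm hσS, relNum_ptPerm hρS,
    fun v => ⟨(hdisj v).resolve_left, (hdisj v).resolve_right⟩⟩, ?_⟩
  exact exists_isoAlgebra_mul_ne_of_disjoint hdisj hπ hτ (relNum_ptPerm hσS) (relNum_ptPerm hρS)

theorem stmt19 {α : Type*} [Fintype α] [DecidableEq α]
    (M : PreMatroid α) (hM : M.IsMatroid)
    (S : Finset (Finset α)) (hS : ∀ A ∈ S, A ⊆ M.E) (hcov : Covers S M.E)
    (a b c d : α) (hab : a ≠ b) (hac : a ≠ c) (had : a ≠ d) (hbc : b ≠ c)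
    (hbd : b ≠ d) (hcd : c ≠ d)
    (A B : Finset α) (hA : A ∈ S) (hB : B ∈ S)
    (haA : a ∈ A) (hbA : b ∈ A) (hcB : c ∈ B) (hdB : d ∈ B)
    (honlyA : ∀ C ∈ S, C ≠ A → a ∉ C ∧ b ∉ C)
    (honlyB : ∀ C ∈ S, C ≠ B → c ∉ C ∧ d ∉ C) :
    (∃ π τ : Equiv.Perm (PtSet S),
      (∀ v : PtSet S,
        (π v).val = (v.val.1.image (Equiv.swap a b), Equiv.swap a b v.val.2)) ∧
      (∀ v : PtSet S,
        (τ v).val = (v.val.1.image (Equiv.swap c d), Equiv.swap c d v.val.2)) ∧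
      π ≠ 1 ∧ τ ≠ 1 ∧
      (∀ v w : PtSet S, relNum (π v).val (π w).val = relNum v.val w.val) ∧
      (∀ v w : PtSet S, relNum (τ v).val (τ w).val = relNum v.val w.val) ∧
      (∀ v : PtSet S, (π v ≠ v → τ v = v) ∧ (τ v ≠ v → π v = v))) ∧
    ∃ x y : MatIsoAlgebra S S, x * y ≠ y * x :=
  stmt19_general (Equiv.Perm.disjoint_swap_swap (by simp [*]))
    (image_swap_eq_self_of_mem_unique haA hbA honlyA)
    (image_swap_eq_self_of_mem_unique hcB hdB honlyB)
    hA hB haA hcB (by simpa using hab.symm) (by simpa using hcd.symm)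

end MatroidGame
end
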